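/- arXiv:2012.15663 — 2 statements merged into one kernel-verified Lean document; each statement's English description precedes it below -/
import Mathlib

section
/- Let n and h be positive integers with 2h ≤ n + 2, and let ζ ∈ ℂ be a root of the SP polynomial S(x,n,h). Then ζ ≠ 1 and ζ is a root of unity; more precisely, ζ^h = 1 or ζ^{n+2-h} = 1. -/
open Polynomial

/-- The staircase palindromic (SP) polynomial `S(x,n,h)` over `ℂ`, as a product of
the all-one polynomials of degrees `h-1` and `n+1-h`. -/
noncomputable def spPolyC (n h : ℕ) : ℂ[X] :=
  (∑ i ∈ Finset.range h, X ^ i) * (∑ i ∈ Finset.range (n + 2 - h), X ^ i)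

theorem geom_sum_eq_zero_iff {R : Type*} [Ring R] [NoZeroDivisors R]
    {m : ℕ} (hm : (m : R) ≠ 0) {x : R} :
    ∑ i ∈ Finset.range m, x ^ i = 0 ↔ x ≠ 1 ∧ x ^ m = 1 := by
  rcases eq_or_ne x 1 with rfl | hx
  · simp [hm]
  · have hx' : x - 1 ≠ 0 := sub_ne_zero.mpr hx
    rw [and_iff_right hx, ← sub_eq_zero (a := x ^ m), ← geom_sum_mul, mul_eq_zero_iff_right hx']

theorem stmt_4_general {R : Type*} [CommRing R] [NoZeroDivisors R] {k l : ℕ}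
    (hk : (k : R) ≠ 0) (hl : (l : R) ≠ 0) (ζ : R) :
    ((∑ i ∈ Finset.range k, X ^ i) * (∑ i ∈ Finset.range l, X ^ i) : R[X]).eval ζ = 0 ↔
      ζ ≠ 1 ∧ (ζ ^ k = 1 ∨ ζ ^ l = 1) := by
  rw [eval_mul, eval_geom_sum, eval_geom_sum, mul_eq_zero, geom_sum_eq_zero_iff hk,
    geom_sum_eq_zero_iff hl, and_or_left]

theorem stmt_4 (n h : ℕ) (hn : 0 < n) (hh : 0 < h) (hnh : 2 * h ≤ n + 2)
    (ζ : ℂ) (hζ : (spPolyC n h).eval ζ = 0) :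
    ζ ≠ 1 ∧ (ζ ^ h = 1 ∨ ζ ^ (n + 2 - h) = 1) := by
  have hl : n + 2 - h ≠ 0 := by omega
  exact (stmt_4_general (Nat.cast_ne_zero.mpr hh.ne') (Nat.cast_ne_zero.mpr hl) ζ).mp hζ
end

section
/- Let n and h be positive integers with 2h ≤ n + 2. Then every complex root ζ of the SP polynomial S(x,n,h) satisfies |ζ| = 1, i.e., all roots of S(x,n,h) lie on the unit circle. -/
open Polynomial

theorem pow_eq_one_of_geom_sum_eq_zero {R : Type*} [Ring R] {x : R} {m : ℕ}
    (hx : ∑ i ∈ Finset.range m, x ^ i = 0) : x ^ m = 1 :=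
  sub_eq_zero.mp <| by rw [← geom_sum_mul, hx, zero_mul]

theorem norm_eq_one_of_geom_sum_eq_zero {R : Type*} [NormedRing R] [NormMulClass R]
    [NormOneClass R] {x : R} {m : ℕ} (hm : m ≠ 0)
    (hx : ∑ i ∈ Finset.range m, x ^ i = 0) : ‖x‖ = 1 :=
  (isOfFinOrder_iff_pow_eq_one.mpr
    ⟨m, Nat.pos_of_ne_zero hm, pow_eq_one_of_geom_sum_eq_zero hx⟩).norm_eq_one

theorem eval_spPolyC (n h : ℕ) (z : ℂ) :
    (spPolyC n h).eval z =
      (∑ i ∈ Finset.range h, z ^ i) * ∑ i ∈ Finset.range (n + 2 - h), z ^ i := by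
  rw [spPolyC, eval_mul, eval_geom_sum, eval_geom_sum]

theorem stmt_5_general {n h : ℕ} (hh : 0 < h) (hhn : h < n + 2) {ζ : ℂ}
    (hζ : (spPolyC n h).eval ζ = 0) : ‖ζ‖ = 1 := by
  rw [eval_spPolyC, mul_eq_zero] at hζ
  rcases hζ with hleft | hright
  · exact norm_eq_one_of_geom_sum_eq_zero hh.ne' hleft
  · exact norm_eq_one_of_geom_sum_eq_zero (Nat.sub_ne_zero_of_lt hhn) hright

theorem stmt_5 (n h : ℕ) (hn : 0 < n) (hh : 0 < h) (hnh : 2 * h ≤ n + 2)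
    (ζ : ℂ) (hζ : (spPolyC n h).eval ζ = 0) :
    ‖ζ‖ = 1 := by
  exact stmt_5_general hh (by lia) hζ
end
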